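/- Let M ∈ SL(2,ℤ) with entries [[a,b],[c,d]] satisfying |a| > 2, |b| > 2, |c| > 2 and |d| > 2. Then each of the four matrices M·s_i·M⁻¹·s_j (i,j ∈ {1,2}), where s1 = [[1,0],[-1,1]] and s2 = [[1,1],[0,1]], is hyperbolic, i.e. has |trace| > 2. -/

import Mathlib

/-!
Both `s1` and `s2` are symplectic transvections `T v : x ↦ x + ω(v, x) v` of the plane, where `ω`
is the standard area form and `v` is a basis vector. Conjugation by `M` turns `T u` into `T (M u)`,
and `tr (T u * T v) = 2 - ω(u, v) ^ 2`. For basis vectors `u` and `v`, the number `ω(M u, v)` is an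
entry of `M` up to sign, and `|2 - x ^ 2| > 2` exactly when `|x| > 2`.
-/

open Matrix

def s1 : Matrix.SpecialLinearGroup (Fin 2) ℤ :=
  ⟨!![1, 0; -1, 1], by norm_num [Matrix.det_fin_two_of]⟩

def s2 : Matrix.SpecialLinearGroup (Fin 2) ℤ :=
  ⟨!![1, 1; 0, 1], by norm_num [Matrix.det_fin_two_of]⟩

open scoped MatrixGroups

section CommRing

variable {R : Type*} [CommRing R]

theorem trace_one_add_vecMulVec_mul_one_add_vecMulVec {n : Type*} [Fintype n] [DecidableEq n]
    (u φ v ψ : n → R) :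
    trace ((1 + vecMulVec u φ) * (1 + vecMulVec v ψ)) =
      Fintype.card n + u ⬝ᵥ φ + v ⬝ᵥ ψ + (φ ⬝ᵥ v) * (u ⬝ᵥ ψ) := by
  simp only [add_mul, mul_add, one_mul, mul_one, vecMulVec_mul_vecMulVec, trace_add, trace_one,
    trace_vecMulVec, dotProduct_smul, smul_eq_mul]
  ring

/-- The rotation of the plane by a quarter turn. It encodes the standard area form
`ω(v, x) = v 0 * x 1 - v 1 * x 0` as `quarterTurn v ⬝ᵥ x`. -/
def quarterTurn (v : Fin 2 → R) : Fin 2 → R :=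
  ![-v 1, v 0]

theorem quarterTurn_dotProduct (u v : Fin 2 → R) :
    quarterTurn u ⬝ᵥ v = -(u ⬝ᵥ quarterTurn v) := by
  simp only [quarterTurn, vec2_dotProduct, cons_val_zero, cons_val_one]
  ring

theorem dotProduct_quarterTurn_self (v : Fin 2 → R) : v ⬝ᵥ quarterTurn v = 0 := by
  simp only [quarterTurn, vec2_dotProduct, cons_val_zero, cons_val_one]
  ring

theorem quarterTurn_vecMul_adjugate (A : Matrix (Fin 2) (Fin 2) R) (v : Fin 2 → R) :
    quarterTurn v ᵥ* adjugate A = quarterTurn (A *ᵥ v) := by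
  ext i
  fin_cases i <;>
    simp only [quarterTurn, adjugate_fin_two, vecMul, mulVec, vec2_dotProduct, of_apply, cons_val',
      cons_val_fin_one, Fin.zero_eta, Fin.mk_one, cons_val_zero, cons_val_one] <;>
    ring

/-- The symplectic transvection `x ↦ x + ω(v, x) v` of the plane, as a matrix of determinant one. -/
def symplecticTransvection (v : Fin 2 → R) : SL(2, R) :=
  ⟨1 + vecMulVec v (quarterTurn v), by
    simp only [det_fin_two, Matrix.add_apply, vecMulVec_apply, quarterTurn, one_apply_eq,
      one_apply_ne zero_ne_one, one_apply_ne one_ne_zero, cons_val_zero, cons_val_one]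
    ring⟩

theorem coe_symplecticTransvection (v : Fin 2 → R) :
    (symplecticTransvection v : Matrix (Fin 2) (Fin 2) R) = 1 + vecMulVec v (quarterTurn v) :=
  rfl

theorem conj_symplecticTransvection (M : SL(2, R)) (v : Fin 2 → R) :
    M * symplecticTransvection v * M⁻¹ =
      symplecticTransvection ((M : Matrix (Fin 2) (Fin 2) R) *ᵥ v) := by
  apply Subtype.ext
  simp only [Matrix.SpecialLinearGroup.coe_mul, Matrix.SpecialLinearGroup.coe_inv,
    coe_symplecticTransvection, mul_add, add_mul, mul_one, mul_adjugate, M.det_coe, one_smul,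
    mul_vecMulVec, vecMulVec_mul, quarterTurn_vecMul_adjugate]

theorem trace_symplecticTransvection_mul (u v : Fin 2 → R) :
    trace ((symplecticTransvection u * symplecticTransvection v : SL(2, R)) :
      Matrix (Fin 2) (Fin 2) R) = 2 - (u ⬝ᵥ quarterTurn v) ^ 2 := by
  rw [Matrix.SpecialLinearGroup.coe_mul, coe_symplecticTransvection, coe_symplecticTransvection,
    trace_one_add_vecMulVec_mul_one_add_vecMulVec, dotProduct_quarterTurn_self,
    dotProduct_quarterTurn_self, quarterTurn_dotProduct, Fintype.card_fin, Nat.cast_ofNat]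
  ring

end CommRing

section LinearOrder

variable {R : Type*} [CommRing R] [LinearOrder R]

theorem abs_dotProduct_quarterTurn_single (v : Fin 2 → R) (j : Fin 2) :
    |v ⬝ᵥ quarterTurn (Pi.single j 1)| = |v j.rev| := by
  fin_cases j <;> simp [quarterTurn, dotProduct]

variable [IsStrictOrderedRing R]

theorem two_lt_abs_two_sub_sq_iff {x : R} : 2 < |2 - x ^ 2| ↔ 2 < |x| := by
  have four_lt_sq_iff : 2 ^ 2 < x ^ 2 ↔ 2 < |x| := by rw [sq_lt_sq, abs_two]
  rw [← four_lt_sq_iff, lt_abs]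
  constructor
  · rintro (h | h) <;> linarith [sq_nonneg x]
  · intro h
    right
    linarith

theorem hyperbolic_of_large_entries_general (M : SL(2, R)) (i j : Fin 2) :
    2 < |trace ((M * symplecticTransvection (Pi.single i 1) * M⁻¹ *
      symplecticTransvection (Pi.single j 1) : SL(2, R)) : Matrix (Fin 2) (Fin 2) R)| ↔
      2 < |M j.rev i| := by
  rw [conj_symplecticTransvection, trace_symplecticTransvection_mul, two_lt_abs_two_sub_sq_iff,
    abs_dotProduct_quarterTurn_single, mulVec_single_one, col_apply]

end LinearOrder

theorem s1_eq_symplecticTransvection : s1 = symplecticTransvection (Pi.single 1 1) := by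
  decide

theorem s2_eq_symplecticTransvection : s2 = symplecticTransvection (Pi.single 0 1) := by
  decide

/-- If all entries of `M ∈ SL(2,ℤ)` have absolute value `> 2`, then each of the
four matrices `M·sᵢ·M⁻¹·sⱼ` is hyperbolic, i.e. has `|trace| > 2`. -/
theorem hyperbolic_of_large_entries (M : Matrix.SpecialLinearGroup (Fin 2) ℤ)
    (a b c d : ℤ) (hM : (M : Matrix (Fin 2) (Fin 2) ℤ) = !![a, b; c, d])
    (ha : |a| > 2) (hb : |b| > 2) (hc : |c| > 2) (hd : |d| > 2) :
    ∀ s t : Matrix.SpecialLinearGroup (Fin 2) ℤ, s ∈ ({s1, s2} : Set _) →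
      t ∈ ({s1, s2} : Set _) →
      |Matrix.trace ((M * s * M⁻¹ * t : Matrix.SpecialLinearGroup (Fin 2) ℤ) :
        Matrix (Fin 2) (Fin 2) ℤ)| > 2 := by
  rw [s1_eq_symplecticTransvection, s2_eq_symplecticTransvection]
  rintro _ _ (rfl | rfl) (rfl | rfl) <;>
    exact (hyperbolic_of_large_entries_general M _ _).2 (by simpa [hM])
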